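/- Let N ≥ 1 and let Ω be a domain in ℂ^N. Let F_j : Ω → ℂ^N be holomorphic maps with det F_j'(z) ≠ 0 for every z ∈ Ω and every j, and assume F_j converges locally uniformly on Ω to a map F whose image F(Ω) has nonempty interior in ℂ^N. Then det F'(z) ≠ 0 for every z ∈ Ω, and consequently F(Ω) is an open subset of ℂ^N. -/

import Mathlib

open Filter Topology Set

/-!
By the several-variable Weierstrass theorem `F` is holomorphic and `f j' → F'` locally uniformly,
so the Jacobians `det (f j)'`, which are holomorphic and nowhere zero, converge locally uniformly
to `det F'`. Hurwitz' theorem, applied on complex lines, shows that `det F'` is nowhere zero or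
identically zero. In the second case `F(Ω)` is a null set by Sard's lemma, so it has empty
interior. In the first case the inverse function theorem makes `F(Ω)` open.
-/

section HolomorphicLimits

open Metric

variable {E G ι : Type*} [NormedAddCommGroup E] [NormedSpace ℂ E] [NormedAddCommGroup G]
  [NormedSpace ℂ G] {l : Filter ι}

theorem norm_fderiv_le_of_forall_mem_ball_norm_le {f : E → G} {c : E} {r M : ℝ} (hr : 0 < r)
    (hf : DifferentiableOn ℂ f (ball c r)) (hM : ∀ z ∈ ball c r, ‖f z‖ ≤ M) :
    ‖fderiv ℂ f c‖ ≤ 2 * M / r := by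
  refine Complex.norm_fderiv_le_div_of_mapsTo_ball hf (fun z hz ↦ ?_) hr
  rw [mem_closedBall, dist_eq_norm]
  linarith [norm_sub_le (f z) (f c), hM z hz, hM c (mem_ball_self hr)]

theorem tendstoUniformlyOn_fderiv {f : ι → E → G} {g : E → G} {s : Set E} {δ : ℝ} (hδ : 0 < δ)
    (hd : ∀ᶠ n in l, DifferentiableOn ℂ (f n) (thickening δ s))
    (hg : DifferentiableOn ℂ g (thickening δ s))
    (hf : TendstoUniformlyOn f g l (thickening δ s)) :
    TendstoUniformlyOn (fun n ↦ fderiv ℂ (f n)) (fderiv ℂ g) l s := by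
  rw [Metric.tendstoUniformlyOn_iff] at hf ⊢
  intro ε hε
  filter_upwards [hd, hf (ε * δ / 4) (by positivity)] with n hdn hfn z hz
  have hball : ball z δ ⊆ thickening δ s := ball_subset_thickening hz δ
  have hnhds : thickening δ s ∈ 𝓝 z := mem_of_superset (ball_mem_nhds z hδ) hball
  have hcauchy : ‖fderiv ℂ (g - f n) z‖ ≤ 2 * (ε * δ / 4) / δ :=
    norm_fderiv_le_of_forall_mem_ball_norm_le hδ ((hg.sub hdn).mono hball) fun w hw ↦ by
      rw [Pi.sub_apply, ← dist_eq_norm]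
      exact (hfn w (hball hw)).le
  rw [fderiv_sub (hg.differentiableAt hnhds) (hdn.differentiableAt hnhds), ← dist_eq_norm]
    at hcauchy
  calc dist (fderiv ℂ g z) (fderiv ℂ (f n) z) ≤ 2 * (ε * δ / 4) / δ := hcauchy
    _ = ε / 2 := by field_simp; norm_num
    _ < ε := half_lt_self hε

theorem uniformCauchySeqOn_fderiv {f : ι → E → G} {s : Set E} {δ : ℝ} (hδ : 0 < δ)
    (hd : ∀ᶠ n in l, DifferentiableOn ℂ (f n) (thickening δ s))
    (hf : UniformCauchySeqOn f l (thickening δ s)) :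
    UniformCauchySeqOn (fun n ↦ fderiv ℂ (f n)) l s := by
  rw [SeminormedAddGroup.uniformCauchySeqOn_iff_tendstoUniformlyOn_zero] at hf ⊢
  have hpair := hd.prod_mk hd
  have hlim := tendstoUniformlyOn_fderiv hδ (hpair.mono fun n hn ↦ hn.1.neg.add hn.2)
    (differentiableOn_const 0) hf
  rw [fderiv_fun_const] at hlim
  refine hlim.congr ?_
  filter_upwards [hpair] with n hn z hz
  have hnhds : thickening δ s ∈ 𝓝 z := isOpen_thickening.mem_nhds (self_subset_thickening hδ s hz)
  exact ((hn.1.differentiableAt hnhds).hasFDerivAt.neg.add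
    (hn.2.differentiableAt hnhds).hasFDerivAt).fderiv

theorem differentiableOn_of_tendstoUniformlyOn [CompleteSpace G] [l.NeBot] {f : ι → E → G}
    {g : E → G} {U : Set E} (hU : IsOpen U) (hd : ∀ᶠ n in l, DifferentiableOn ℂ (f n) U)
    (hf : TendstoUniformlyOn f g l U) : DifferentiableOn ℂ g U := by
  intro x hx
  obtain ⟨r, hr, hrU⟩ := Metric.isOpen_iff.1 hU x hx
  have hsub : thickening (r / 2) (ball x (r / 2)) ⊆ U :=
    (thickening_ball x (r / 2) (r / 2)).trans (by rwa [add_halves])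
  have hcauchy : UniformCauchySeqOn (fun n ↦ fderiv ℂ (f n)) l (ball x (r / 2)) :=
    uniformCauchySeqOn_fderiv (half_pos hr) (hd.mono fun n hn ↦ hn.mono hsub)
      (hf.mono hsub).uniformCauchySeqOn
  choose! g' hg' using fun z (hz : z ∈ ball x (r / 2)) ↦
    CompleteSpace.complete (hcauchy.cauchy_map hz)
  have hnhds : ball x (r / 2) ∈ 𝓝 x := ball_mem_nhds x (half_pos hr)
  have hlim : TendstoUniformlyOnFilter (fun n ↦ fderiv ℂ (f n)) g' l (𝓝 x) :=
    (hcauchy.tendstoUniformlyOn_of_tendsto hg').tendstoUniformlyOnFilter.mono_right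
      (le_principal_iff.2 hnhds)
  have hder : HasFDerivAt g (g' x) x := by
    refine hasFDerivAt_of_tendstoUniformlyOnFilter (f := f) hlim ?_ ?_
    · filter_upwards [hd.prod_mk (hU.mem_nhds hx)] with p hp
      exact (hp.1.differentiableAt (hU.mem_nhds hp.2)).hasFDerivAt
    · filter_upwards [hU.mem_nhds hx] with y hy using hf.tendsto_at hy
  exact hder.differentiableAt.differentiableWithinAt

theorem differentiableOn_of_tendstoLocallyUniformlyOn [ProperSpace E] [CompleteSpace G] [l.NeBot]
    {f : ι → E → G} {g : E → G} {U : Set E} (hU : IsOpen U)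
    (hd : ∀ᶠ n in l, DifferentiableOn ℂ (f n) U) (hf : TendstoLocallyUniformlyOn f g l U) :
    DifferentiableOn ℂ g U := by
  intro x hx
  obtain ⟨r, hr, hrU⟩ := nhds_basis_closedBall.mem_iff.1 (hU.mem_nhds hx)
  have hunif : TendstoUniformlyOn f g l (closedBall x r) :=
    (tendstoLocallyUniformlyOn_iff_forall_isCompact hU).1 hf _ hrU (isCompact_closedBall x r)
  have hball : ball x r ⊆ U := ball_subset_closedBall.trans hrU
  exact ((differentiableOn_of_tendstoUniformlyOn isOpen_ball (hd.mono fun n hn ↦ hn.mono hball)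
    (hunif.mono ball_subset_closedBall)).differentiableAt
      (ball_mem_nhds x hr)).differentiableWithinAt

theorem tendstoLocallyUniformlyOn_fderiv [ProperSpace E] [CompleteSpace G] [l.NeBot]
    {f : ι → E → G} {g : E → G} {U : Set E} (hU : IsOpen U)
    (hd : ∀ᶠ n in l, DifferentiableOn ℂ (f n) U) (hf : TendstoLocallyUniformlyOn f g l U) :
    TendstoLocallyUniformlyOn (fun n ↦ fderiv ℂ (f n)) (fderiv ℂ g) l U := by
  rw [tendstoLocallyUniformlyOn_iff_forall_isCompact hU]
  intro K hKU hK
  obtain ⟨δ, hδ, hδU⟩ := hK.exists_cthickening_subset_open hU hKU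
  have hunif : TendstoUniformlyOn f g l (cthickening δ K) :=
    (tendstoLocallyUniformlyOn_iff_forall_isCompact hU).1 hf _ hδU hK.cthickening
  have hsub : thickening δ K ⊆ U := (thickening_subset_cthickening δ K).trans hδU
  exact tendstoUniformlyOn_fderiv hδ (hd.mono fun n hn ↦ hn.mono hsub)
    ((differentiableOn_of_tendstoLocallyUniformlyOn hU hd hf).mono hsub)
    (hunif.mono (thickening_subset_cthickening δ K))

end HolomorphicLimits

section HolomorphicDerivative

open Metric

variable {E G : Type*} [NormedAddCommGroup E] [NormedSpace ℂ E] [NormedAddCommGroup G]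
  [NormedSpace ℂ G] {f : E → G}

theorem norm_sub_sub_fderiv_le_of_forall_mem_ball_norm_le {z w : E} {r M : ℝ}
    (hf : DifferentiableOn ℂ f (ball z r)) (hM : ∀ y ∈ ball z r, ‖f y‖ ≤ M) (hw : w ∈ ball z r) :
    ‖f w - f z - fderiv ℂ f z (w - z)‖ ≤ 4 * M * (‖w - z‖ / r) ^ 2 := by
  have hr : 0 < r := pos_of_mem_ball hw
  have hderiv : ‖fderiv ℂ f z‖ ≤ 2 * M / r := norm_fderiv_le_of_forall_mem_ball_norm_le hr hf hM
  let φ : E → G := fun y ↦ f y - fderiv ℂ f z (y - z)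
  have hφ (y : E) : φ y - φ z = f y - f z - fderiv ℂ f z (y - z) := by
    simp only [φ, sub_self, map_zero]
    abel
  have hφd : DifferentiableOn ℂ φ (ball z r) :=
    hf.sub ((fderiv ℂ f z).differentiable.comp (differentiable_id.sub_const z)).differentiableOn
  have hφmaps : MapsTo φ (ball z r) (closedBall (φ z) (4 * M)) := by
    intro y hy
    have hlin : ‖fderiv ℂ f z (y - z)‖ ≤ 2 * M := calc
      ‖fderiv ℂ f z (y - z)‖ ≤ 2 * M / r * r :=
        (fderiv ℂ f z).le_of_opNorm_le_of_le hderiv (mem_ball_iff_norm.1 hy).le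
      _ = 2 * M := div_mul_cancel₀ _ hr.ne'
    rw [mem_closedBall, dist_eq_norm, hφ]
    linarith [norm_sub_le (f y - f z) (fderiv ℂ f z (y - z)), norm_sub_le (f y) (f z), hM y hy,
      hM z (mem_ball_self hr)]
  have hφo : (φ · - φ z) =o[𝓝 z] fun y ↦ ‖y - z‖ ^ 1 := by
    simp only [hφ, pow_one]
    exact (hasFDerivAt_iff_isLittleO.1
      (hf.differentiableAt (ball_mem_nhds z hr)).hasFDerivAt).norm_right
  have hschwarz := Complex.dist_le_mul_div_pow_of_mapsTo_ball_of_isLittleO hφd hφmaps hφo hw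
  rwa [dist_eq_norm, hφ, dist_eq_norm] at hschwarz

theorem norm_inv_smul_sub_sub_fderiv_apply_le {z v : E} {t : ℂ} {r M : ℝ}
    (hf : DifferentiableOn ℂ f (ball z r)) (hM : ∀ y ∈ ball z r, ‖f y‖ ≤ M) (ht : t ≠ 0)
    (htv : ‖t • v‖ < r) :
    ‖t⁻¹ • (f (z + t • v) - f z) - fderiv ℂ f z v‖ ≤ 4 * M * (‖v‖ / r) ^ 2 * ‖t‖ := by
  have hmem : z + t • v ∈ ball z r := by
    rwa [mem_ball_iff_norm, add_sub_cancel_left]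
  have htaylor := norm_sub_sub_fderiv_le_of_forall_mem_ball_norm_le hf hM hmem
  rw [add_sub_cancel_left] at htaylor
  calc ‖t⁻¹ • (f (z + t • v) - f z) - fderiv ℂ f z v‖
      = ‖t⁻¹ • (f (z + t • v) - f z - fderiv ℂ f z (t • v))‖ := by
        rw [map_smul, smul_sub _ _ (t • _), inv_smul_smul₀ ht]
    _ ≤ ‖t‖⁻¹ * (4 * M * (‖t • v‖ / r) ^ 2) := by
        rw [norm_smul, norm_inv]
        gcongr
    _ = 4 * M * (‖v‖ / r) ^ 2 * ‖t‖ := by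
        rw [norm_smul]
        field_simp [norm_ne_zero_iff.2 ht]

theorem tendstoUniformlyOn_inv_smul_sub_fderiv_apply {s : Set E} {r M : ℝ} (hr : 0 < r)
    (hf : DifferentiableOn ℂ f (thickening r s)) (hM : ∀ z ∈ thickening r s, ‖f z‖ ≤ M) (v : E) :
    TendstoUniformlyOn (fun (t : ℂ) z ↦ t⁻¹ • (f (z + t • v) - f z)) (fun z ↦ fderiv ℂ f z v)
      (𝓝[≠] 0) s := by
  rw [Metric.tendstoUniformlyOn_iff]
  intro ε hε
  have hsmall : ∀ᶠ t : ℂ in 𝓝 0, ‖t • v‖ < r :=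
    ContinuousAt.eventually_lt (by fun_prop) continuousAt_const (by simpa using hr)
  have herror : ∀ᶠ t : ℂ in 𝓝 0, 4 * M * (‖v‖ / r) ^ 2 * ‖t‖ < ε :=
    ContinuousAt.eventually_lt (by fun_prop) continuousAt_const (by simpa using hε)
  filter_upwards [nhdsWithin_le_nhds hsmall, nhdsWithin_le_nhds herror, self_mem_nhdsWithin]
    with t htv htε ht z hz
  have hball : ball z r ⊆ thickening r s := ball_subset_thickening hz r
  rw [dist_comm, dist_eq_norm]
  exact (norm_inv_smul_sub_sub_fderiv_apply_le (hf.mono hball) (fun y hy ↦ hM y (hball hy))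
    ht htv).trans_lt htε

theorem differentiableOn_fderiv_apply [CompleteSpace G] {U : Set E} (hU : IsOpen U)
    (hf : DifferentiableOn ℂ f U) (v : E) : DifferentiableOn ℂ (fun z ↦ fderiv ℂ f z v) U := by
  intro c hc
  have hcont : ContinuousAt f c := (hf.differentiableAt (hU.mem_nhds hc)).continuousAt
  obtain ⟨r, hr, hrU⟩ := Metric.mem_nhds_iff.1
    (inter_mem (hU.mem_nhds hc) (hcont.norm.eventually_lt_const (lt_add_one ‖f c‖)))
  have hr2 : 0 < r / 2 := half_pos hr
  have hthick : thickening (r / 2) (ball c (r / 2)) ⊆ ball c r :=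
    (thickening_ball c (r / 2) (r / 2)).trans_eq (by rw [add_halves])
  have hfr : DifferentiableOn ℂ f (ball c r) := hf.mono fun z hz ↦ (hrU hz).1
  have hquot : ∀ᶠ t : ℂ in 𝓝[≠] 0,
      DifferentiableOn ℂ (fun z ↦ t⁻¹ • (f (z + t • v) - f z)) (ball c (r / 2)) := by
    have hsmall : ∀ᶠ t : ℂ in 𝓝 0, ‖t • v‖ < r / 2 :=
      ContinuousAt.eventually_lt (by fun_prop) continuousAt_const (by simpa using hr)
    filter_upwards [nhdsWithin_le_nhds hsmall] with t htv
    have hshift : MapsTo (· + t • v) (ball c (r / 2)) (ball c r) := fun z hz ↦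
      hthick (mem_thickening_iff.2 ⟨z, hz, by simpa [dist_eq_norm] using htv⟩)
    exact ((hfr.comp (differentiableOn_id.add_const _) hshift).sub
      (hfr.mono (ball_subset_ball (half_le_self hr.le)))).const_smul _
  have hlim := tendstoUniformlyOn_inv_smul_sub_fderiv_apply hr2 (hfr.mono hthick)
    (fun z hz ↦ (hrU (hthick hz)).2.le) v
  exact ((differentiableOn_of_tendstoUniformlyOn isOpen_ball hquot hlim).differentiableAt
    (ball_mem_nhds c hr2)).differentiableWithinAt

theorem continuousOn_fderiv_of_differentiableOn [FiniteDimensional ℂ E] [CompleteSpace G]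
    {U : Set E} (hU : IsOpen U) (hf : DifferentiableOn ℂ f U) : ContinuousOn (fderiv ℂ f) U :=
  continuousOn_clm_apply.2 fun v ↦ (differentiableOn_fderiv_apply hU hf v).continuousOn

end HolomorphicDerivative

section Determinant

variable {𝕜 E F n : Type*} [NontriviallyNormedField 𝕜] [NormedAddCommGroup E] [NormedSpace 𝕜 E]
  [NormedAddCommGroup F] [NormedSpace 𝕜 F] {s : Set E}

theorem differentiableOn_matrix_det [Fintype n] [DecidableEq n] {A : E → Matrix n n 𝕜}
    (hA : ∀ i j, DifferentiableOn 𝕜 (fun z ↦ A z i j) s) :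
    DifferentiableOn 𝕜 (fun z ↦ (A z).det) s := by
  simp only [Matrix.det_apply']
  refine DifferentiableOn.fun_sum fun σ _ ↦ DifferentiableOn.const_mul (fun z hz ↦ ?_) _
  exact (HasFDerivWithinAt.finsetProd
    fun i _ ↦ (hA (σ i) i z hz).hasFDerivWithinAt).differentiableWithinAt

theorem differentiableOn_clm_det [CompleteSpace 𝕜] [FiniteDimensional 𝕜 F] {A : E → F →L[𝕜] F}
    (hA : ∀ v, DifferentiableOn 𝕜 (fun z ↦ A z v) s) :
    DifferentiableOn 𝕜 (fun z ↦ (A z).det) s := by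
  classical
  let b := Module.finBasis 𝕜 F
  simp only [ContinuousLinearMap.det, ← LinearMap.det_toMatrix b]
  refine differentiableOn_matrix_det fun i j ↦ ?_
  simp only [LinearMap.toMatrix_apply]
  exact (LinearMap.toContinuousLinearMap (b.coord i)).differentiable.comp_differentiableOn
    (hA (b j))

end Determinant

section Hurwitz

open Metric

variable {E ι : Type*} [NormedAddCommGroup E] [NormedSpace ℂ E] {l : Filter ι}

theorem le_norm_of_forall_mem_frontier_le_norm [Nontrivial E] {f : E → ℂ} {U : Set E} {m : ℝ}
    (hU : Bornology.IsBounded U) (hf : DiffContOnCl ℂ f U) (hne : ∀ z ∈ closure U, f z ≠ 0)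
    (hm : ∀ z ∈ frontier U, m ≤ ‖f z‖) {z : E} (hz : z ∈ closure U) : m ≤ ‖f z‖ := by
  rcases le_or_gt m 0 with hm0 | hm0
  · exact hm0.trans (norm_nonneg _)
  have hinv : ‖(f z)⁻¹‖ ≤ m⁻¹ :=
    Complex.norm_le_of_forall_mem_frontier_norm_le hU (hf.inv hne)
      (fun w hw ↦ by simpa only [Pi.inv_apply, norm_inv] using inv_anti₀ hm0 (hm w hw)) hz
  rwa [norm_inv, inv_le_inv₀ (norm_pos_iff.2 (hne z hz)) hm0] at hinv

theorem ne_zero_of_tendstoUniformlyOn_closure [Nontrivial E] [ProperSpace E] [l.NeBot]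
    {f : ι → E → ℂ} {g : E → ℂ} {U : Set E} (hU : Bornology.IsBounded U)
    (hd : ∀ᶠ n in l, DiffContOnCl ℂ (f n) U) (hne : ∀ᶠ n in l, ∀ z ∈ closure U, f n z ≠ 0)
    (hlim : TendstoUniformlyOn f g l (closure U)) (hg : ∀ z ∈ frontier U, g z ≠ 0) {z : E}
    (hz : z ∈ closure U) : g z ≠ 0 := by
  have hcont : ContinuousOn g (closure U) :=
    hlim.continuousOn (hd.mono fun n hn ↦ hn.continuousOn).frequently
  have hcompact : IsCompact (frontier U) :=
    hU.isCompact_closure.of_isClosed_subset isClosed_frontier frontier_subset_closure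
  obtain ⟨m, hm, hgm⟩ := hcompact.exists_forall_le' (hcont.mono frontier_subset_closure).norm
    fun w hw ↦ norm_pos_iff.2 (hg w hw)
  obtain ⟨n, hdn, hnen, hn⟩ :=
    (hd.and (hne.and (Metric.tendstoUniformlyOn_iff.1 hlim (m / 2) (half_pos hm)))).exists
  have hfrontier : ∀ w ∈ frontier U, m / 2 ≤ ‖f n w‖ := fun w hw ↦ by
    have hdist := hn w (frontier_subset_closure hw)
    rw [dist_eq_norm] at hdist
    linarith [norm_sub_norm_le (g w) (f n w), hgm w hw]
  have hle : m / 2 ≤ ‖f n z‖ := le_norm_of_forall_mem_frontier_le_norm hU hdn hnen hfrontier hz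
  intro hgz
  have hdist := hn z hz
  rw [hgz, dist_zero_left] at hdist
  exact hdist.not_ge hle

theorem eventually_eq_zero_of_tendstoLocallyUniformlyOn_complex [l.NeBot] {f : ι → ℂ → ℂ}
    {g : ℂ → ℂ} {U : Set ℂ} {c : ℂ} (hU : IsOpen U) (hd : ∀ᶠ n in l, DifferentiableOn ℂ (f n) U)
    (hne : ∀ᶠ n in l, ∀ z ∈ U, f n z ≠ 0) (hlim : TendstoLocallyUniformlyOn f g l U)
    (hc : c ∈ U) (hgc : g c = 0) : g =ᶠ[𝓝 c] 0 := by
  have hg : AnalyticAt ℂ g c := (hlim.differentiableOn hd hU).analyticAt (hU.mem_nhds hc)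
  refine hg.eventually_eq_zero_or_eventually_ne_zero.resolve_right fun hisolated ↦ ?_
  rw [eventually_nhdsWithin_iff] at hisolated
  obtain ⟨r, hr, hrU⟩ := nhds_basis_closedBall.mem_iff.1 (inter_mem (hU.mem_nhds hc) hisolated)
  have hball : closedBall c r ⊆ U := fun z hz ↦ (hrU hz).1
  have hclosure : closure (ball c r) = closedBall c r := closure_ball c hr.ne'
  refine ne_zero_of_tendstoUniformlyOn_closure (U := ball c r) isBounded_ball
    (hd.mono fun n hn ↦ hn.diffContOnCl_ball hball) ?_ ?_ ?_
    (subset_closure (mem_ball_self hr)) hgc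
  · rw [hclosure]
    exact hne.mono fun n hn z hz ↦ hn z (hball hz)
  · rw [hclosure]
    exact (tendstoLocallyUniformlyOn_iff_forall_isCompact hU).1 hlim _ hball
      (isCompact_closedBall c r)
  · rw [frontier_ball c hr.ne']
    exact fun z hz ↦ (hrU (sphere_subset_closedBall hz)).2 (ne_of_mem_sphere hz hr.ne')

theorem eqOn_zero_ball_of_tendstoLocallyUniformlyOn [l.NeBot] {f : ι → E → ℂ} {g : E → ℂ} {c : E}
    {r : ℝ} (hd : ∀ᶠ n in l, DifferentiableOn ℂ (f n) (ball c r))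
    (hne : ∀ᶠ n in l, ∀ z ∈ ball c r, f n z ≠ 0)
    (hlim : TendstoLocallyUniformlyOn f g l (ball c r)) (hgc : g c = 0) :
    EqOn g 0 (ball c r) := by
  intro z hz
  let line : ℂ → E := fun t ↦ c + t • (z - c)
  have hline : Differentiable ℂ line := by fun_prop
  have hV : IsOpen (line ⁻¹' ball c r) := isOpen_ball.preimage hline.continuous
  have hVc : IsPreconnected (line ⁻¹' ball c r) :=
    (((convex_ball c r).translate_preimage_right c).linear_preimage
      ((LinearMap.toSpanSingleton ℂ E (z - c)).restrictScalars ℝ)).isPreconnected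
  have hd' : ∀ᶠ n in l, DifferentiableOn ℂ (f n ∘ line) (line ⁻¹' ball c r) :=
    hd.mono fun n hn ↦ hn.comp hline.differentiableOn (mapsTo_preimage _ _)
  have hlim' : TendstoLocallyUniformlyOn (fun n ↦ f n ∘ line) (g ∘ line) l (line ⁻¹' ball c r) :=
    hlim.comp line (mapsTo_preimage _ _) hline.continuous.continuousOn
  have hline0 : line 0 = c := by simp only [line, zero_smul, add_zero]
  have hline1 : line 1 = z := by simp only [line, one_smul, add_sub_cancel]
  have h0 : (0 : ℂ) ∈ line ⁻¹' ball c r := by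
    rw [mem_preimage, hline0]
    exact mem_ball_self (pos_of_mem_ball hz)
  have h1 : (1 : ℂ) ∈ line ⁻¹' ball c r := by rwa [mem_preimage, hline1]
  have hgerm : g ∘ line =ᶠ[𝓝 0] 0 :=
    eventually_eq_zero_of_tendstoLocallyUniformlyOn_complex hV hd'
      (hne.mono fun n hn t ht ↦ hn (line t) ht) hlim' h0 (by rw [Function.comp_apply, hline0, hgc])
  have hg1 : g (line 1) = 0 := ((hlim'.differentiableOn hd' hV).analyticOnNhd hV)
    |>.eqOn_zero_of_preconnected_of_eventuallyEq_zero hVc h0 hgerm h1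
  rwa [hline1] at hg1

theorem eqOn_zero_or_forall_ne_zero_of_tendstoLocallyUniformlyOn [l.NeBot] {f : ι → E → ℂ}
    {g : E → ℂ} {U : Set E} (hU : IsOpen U) (hUc : IsPreconnected U)
    (hd : ∀ᶠ n in l, DifferentiableOn ℂ (f n) U) (hne : ∀ᶠ n in l, ∀ z ∈ U, f n z ≠ 0)
    (hlim : TendstoLocallyUniformlyOn f g l U) : EqOn g 0 U ∨ ∀ z ∈ U, g z ≠ 0 := by
  have hcont : ContinuousOn g U :=
    hlim.continuousOn (hd.mono fun n hn ↦ hn.continuousOn).frequently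
  have hzero {z : E} (hz : z ∈ U) (hgz : g z = 0) : g =ᶠ[𝓝 z] 0 := by
    obtain ⟨r, hr, hrU⟩ := Metric.isOpen_iff.1 hU z hz
    exact (eqOn_zero_ball_of_tendstoLocallyUniformlyOn (hd.mono fun n hn ↦ hn.mono hrU)
      (hne.mono fun n hn w hw ↦ hn w (hrU hw)) (hlim.mono hrU) hgz).eventuallyEq_of_mem
        (ball_mem_nhds z hr)
  have hdisjoint : Disjoint {z | g =ᶠ[𝓝 z] 0} (U ∩ g ⁻¹' {0}ᶜ) :=
    Set.disjoint_left.2 fun z hz hz' ↦ hz'.2 hz.eq_of_nhds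
  have hcover : U ⊆ {z | g =ᶠ[𝓝 z] 0} ∪ (U ∩ g ⁻¹' {0}ᶜ) := fun z hz ↦
    (em (g z = 0)).imp (hzero hz) fun hgz ↦ ⟨hz, hgz⟩
  exact (hUc.subset_or_subset isOpen_setOfPred_eventually_nhds
    (hcont.isOpen_inter_preimage hU isOpen_compl_singleton) hdisjoint hcover).imp
      (fun h z hz ↦ EventuallyEq.eq_of_nhds (h hz)) fun h z hz ↦ (h hz).2

end Hurwitz

theorem tendstoLocallyUniformlyOn_continuous_comp {X Y Z ι : Type*} [TopologicalSpace X]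
    [UniformSpace Y] [UniformSpace Z] {l : Filter ι} {f : ι → X → Y} {g : X → Y} {s : Set X}
    {φ : Y → Z} (hφ : Continuous φ) (hg : ContinuousOn g s)
    (hf : TendstoLocallyUniformlyOn f g l s) :
    TendstoLocallyUniformlyOn (fun n x ↦ φ (f n x)) (fun x ↦ φ (g x)) l s := by
  rw [tendstoLocallyUniformlyOn_iff_filter] at hf ⊢
  intro x hx
  have hunif := tendstoUniformlyOnFilter_iff_tendsto.1 (hf x hx)
  have hlim : Tendsto (fun p : ι × X ↦ g p.2) (l ×ˢ 𝓝[s] x) (𝓝 (g x)) :=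
    (hg x hx).tendsto.comp tendsto_snd
  have hlim' : Tendsto (fun p : ι × X ↦ f p.1 p.2) (l ×ˢ 𝓝[s] x) (𝓝 (g x)) :=
    hlim.congr_uniformity hunif
  have hφx : Tendsto φ (𝓝 (g x)) (𝓝 (φ (g x))) := hφ.continuousAt
  rw [tendstoUniformlyOnFilter_iff_tendsto]
  exact ((hφx.comp hlim).prodMk_nhds (hφx.comp hlim')).mono_right (nhds_le_uniformity _)

section Jacobian

open MeasureTheory

variable {E ι : Type*} [NormedAddCommGroup E] [NormedSpace ℂ E] [FiniteDimensional ℂ E]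

theorem eqOn_det_fderiv_zero_or_forall_ne_zero {l : Filter ι} [l.NeBot] {f : ι → E → E}
    {F : E → E} {Ω : Set E} (hΩ : IsOpen Ω) (hΩc : IsPreconnected Ω)
    (hf : ∀ᶠ j in l, DifferentiableOn ℂ (f j) Ω)
    (hdet : ∀ᶠ j in l, ∀ z ∈ Ω, (fderiv ℂ (f j) z).det ≠ 0)
    (hF : TendstoLocallyUniformlyOn f F l Ω) :
    EqOn (fun z ↦ (fderiv ℂ F z).det) 0 Ω ∨ ∀ z ∈ Ω, (fderiv ℂ F z).det ≠ 0 := by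
  have := FiniteDimensional.proper ℂ E
  have hFd : DifferentiableOn ℂ F Ω := differentiableOn_of_tendstoLocallyUniformlyOn hΩ hf hF
  have hjacobian : TendstoLocallyUniformlyOn (fun j z ↦ (fderiv ℂ (f j) z).det)
      (fun z ↦ (fderiv ℂ F z).det) l Ω :=
    tendstoLocallyUniformlyOn_continuous_comp ContinuousLinearMap.continuous_det
      (continuousOn_fderiv_of_differentiableOn hΩ hFd) (tendstoLocallyUniformlyOn_fderiv hΩ hf hF)
  exact eqOn_zero_or_forall_ne_zero_of_tendstoLocallyUniformlyOn hΩ hΩc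
    (hf.mono fun j hj ↦ differentiableOn_clm_det (differentiableOn_fderiv_apply hΩ hj))
    hdet hjacobian

theorem addHaar_image_eq_zero_of_complex_det_eq_zero [MeasurableSpace E] [BorelSpace E]
    (μ : Measure E) [μ.IsAddHaarMeasure] {F : E → E} {F' : E → E →L[ℂ] E} {s : Set E}
    (hF : ∀ z ∈ s, HasFDerivWithinAt F (F' z) s z) (hdet : ∀ z ∈ s, (F' z).det = 0) :
    μ (F '' s) = 0 := by
  refine addHaar_image_eq_zero_of_det_fderivWithin_eq_zero μ
    (fun z hz ↦ (hF z hz).restrictScalars ℝ) fun z hz ↦ ?_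
  calc ((F' z).restrictScalars ℝ).det = Algebra.norm ℝ (F' z).det := LinearMap.det_restrictScalars
    _ = 0 := by rw [hdet z hz, Algebra.norm_zero]

theorem isOpen_image_of_det_fderiv_ne_zero {F : E → E} {U : Set E} (hU : IsOpen U)
    (hF : DifferentiableOn ℂ F U) (hdet : ∀ z ∈ U, (fderiv ℂ F z).det ≠ 0) : IsOpen (F '' U) := by
  have := FiniteDimensional.complete ℂ E
  rw [isOpen_iff_mem_nhds]
  rintro _ ⟨z, hz, rfl⟩
  have hstrict : HasStrictFDerivAt F (fderiv ℂ F z) z :=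
    hasStrictFDerivAt_of_hasFDerivAt_of_continuousAt
      ((hU.eventually_mem hz).mono fun w hw ↦ (hF.differentiableAt (hU.mem_nhds hw)).hasFDerivAt)
      ((continuousOn_fderiv_of_differentiableOn hU hF).continuousAt (hU.mem_nhds hz))
  rw [← ContinuousLinearMap.coe_toContinuousLinearEquivOfDetNeZero _ (hdet z hz)] at hstrict
  rw [← hstrict.map_nhds_eq_of_equiv]
  exact image_mem_map (hU.mem_nhds hz)

theorem stmt4_general [MeasurableSpace E] [BorelSpace E] (μ : Measure E) [μ.IsAddHaarMeasure]
    {l : Filter ι} [l.NeBot] {f : ι → E → E} {F : E → E} {Ω : Set E} (hΩ : IsOpen Ω)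
    (hΩc : IsPreconnected Ω) (hf : ∀ᶠ j in l, DifferentiableOn ℂ (f j) Ω)
    (hdet : ∀ᶠ j in l, ∀ z ∈ Ω, (fderiv ℂ (f j) z).det ≠ 0)
    (hF : TendstoLocallyUniformlyOn f F l Ω) (hμ : μ (F '' Ω) ≠ 0) :
    (∀ z ∈ Ω, (fderiv ℂ F z).det ≠ 0) ∧ IsOpen (F '' Ω) := by
  have := FiniteDimensional.proper ℂ E
  have hFd : DifferentiableOn ℂ F Ω := differentiableOn_of_tendstoLocallyUniformlyOn hΩ hf hF
  have hdetF : ∀ z ∈ Ω, (fderiv ℂ F z).det ≠ 0 :=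
    (eqOn_det_fderiv_zero_or_forall_ne_zero hΩ hΩc hf hdet hF).resolve_left fun hzero ↦
      hμ (addHaar_image_eq_zero_of_complex_det_eq_zero μ
        (fun z hz ↦ (hFd.differentiableAt (hΩ.mem_nhds hz)).hasFDerivAt.hasFDerivWithinAt) hzero)
  exact ⟨hdetF, isOpen_image_of_det_fderiv_ne_zero hΩ hFd hdetF⟩

end Jacobian

theorem stmt4 (N : ℕ) (hN : 1 ≤ N)
    (Ω : Set (Fin N → ℂ)) (hΩopen : IsOpen Ω) (hΩconn : IsConnected Ω)
    (f : ℕ → (Fin N → ℂ) → (Fin N → ℂ))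
    (hfhol : ∀ j, DifferentiableOn ℂ (f j) Ω)
    (hfdet : ∀ j, ∀ z ∈ Ω, (fderiv ℂ (f j) z).det ≠ 0)
    (F : (Fin N → ℂ) → (Fin N → ℂ))
    (hF : ∀ K : Set (Fin N → ℂ), K ⊆ Ω → IsCompact K →
      TendstoUniformlyOn (fun j => f j) F atTop K)
    (hint : (interior (F '' Ω)).Nonempty) :
    (∀ z ∈ Ω, (fderiv ℂ F z).det ≠ 0) ∧ IsOpen (F '' Ω) :=
  stmt4_general MeasureTheory.volume hΩopen hΩconn.isPreconnected (Eventually.of_forall hfhol)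
    (Eventually.of_forall hfdet) ((tendstoLocallyUniformlyOn_iff_forall_isCompact hΩopen).2 hF)
    fun hnull ↦ hint.ne_empty (MeasureTheory.Measure.interior_eq_empty_of_null hnull)
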